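/- Pointwise bound for iterated Poisson integrals by volume: for f ∈ L¹(ℝⁿ) and u(x,t) = f *₁ P_{t₁} *₂ ⋯ *_m P_{t_m}(x) the iterated Poisson integral along unit vectors e₁,…,e_m (any n linearly independent), one has |u(x,t)| ≲ ‖f‖_{L¹(ℝⁿ)} / |R(0,t)| for all (x,t) ∈ ℝⁿ × (ℝ₊)^m, where R(0,t) is the twisted rectangle. -/

import Mathlib

open MeasureTheory

/-- The one-dimensional Poisson kernel `P_t(s) = (1/π) t/(t²+s²)`. -/
noncomputable def poisson (t s : ℝ) : ℝ := (1 / Real.pi) * (t / (t ^ 2 + s ^ 2))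

/-- The twisted rectangle `R(x,r) = {x + Σ λ_j e_j : |λ_j| < r_j}`. -/
def twistedRect {n m : ℕ} (e : Fin m → EuclideanSpace ℝ (Fin n))
    (x : EuclideanSpace ℝ (Fin n)) (r : Fin m → ℝ) : Set (EuclideanSpace ℝ (Fin n)) :=
  {y | ∃ lam : Fin m → ℝ, (∀ j, |lam j| < r j) ∧ y = x + ∑ j, lam j • e j}

/-- The iterated Poisson integral `u(x,t) = f *₁ P_{t₁} *₂ ⋯ *_m P_{t_m}(x)`. -/
noncomputable def iterPoisson {n m : ℕ} (e : Fin m → EuclideanSpace ℝ (Fin n))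
    (f : EuclideanSpace ℝ (Fin n) → ℝ) (t : Fin m → ℝ)
    (x : EuclideanSpace ℝ (Fin n)) : ℝ :=
  ∫ s : Fin m → ℝ, (∏ j, poisson (t j) (s j)) * f (x - ∑ j, s j • e j)

lemma exists_top_set {m : ℕ} (t : Fin m → ℝ) (n : ℕ) (hnm : n ≤ m) :
    ∃ S : Finset (Fin m), S.card = n ∧ ∀ j ∈ S, ∀ k ∉ S, t k ≤ t j := by
  induction n with
  | zero => exact ⟨∅, by simp, by simp⟩
  | succ n ih =>
    obtain ⟨S, hS, h⟩ := ih (by omega)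
    have hne : (Sᶜ).Nonempty := by
      rw [← Finset.card_pos, Finset.card_compl, Fintype.card_fin]; omega
    obtain ⟨a, ha, hmax⟩ := Finset.exists_max_image Sᶜ t hne
    rw [Finset.mem_compl] at ha
    refine ⟨insert a S, by rw [Finset.card_insert_of_notMem ha, hS], ?_⟩
    intro j hj k hk
    rw [Finset.mem_insert, not_or] at hk
    rcases Finset.mem_insert.1 hj with rfl | hj
    · exact hmax k (Finset.mem_compl.2 hk.2)
    · exact h j hj k hk.2

lemma poisson_nonneg {t : ℝ} (ht : 0 < t) (s : ℝ) : 0 ≤ poisson t s := by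
  unfold poisson; positivity

lemma poisson_le {t : ℝ} (ht : 0 < t) (s : ℝ) : poisson t s ≤ t⁻¹ := by
  unfold poisson
  have h1 : 1 / Real.pi ≤ 1 := by
    rw [div_le_one Real.pi_pos]; linarith [Real.pi_gt_three]
  have h2 : t / (t ^ 2 + s ^ 2) ≤ t⁻¹ := by
    rw [div_le_iff₀ (by positivity)]
    have : t⁻¹ * (t ^ 2 + s ^ 2) = t + t⁻¹ * s ^ 2 := by field_simp
    rw [this]; have : 0 ≤ t⁻¹ * s ^ 2 := by positivity
    linarith
  calc _ ≤ 1 * t⁻¹ := by gcongr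
    _ = _ := one_mul _

lemma poisson_eq {t : ℝ} (ht : 0 < t) :
    poisson t = ProbabilityTheory.cauchyPDFReal 0 t.toNNReal := by
  ext s
  rw [ProbabilityTheory.cauchyPDFReal_def]
  simp only [poisson, sub_zero, Real.coe_toNNReal _ ht.le]
  rw [add_comm (s ^ 2)]
  ring

lemma lintegral_prod_poisson {ι : Type*} [Fintype ι] (t : ι → ℝ) (ht : ∀ j, 0 < t j) :
    ∫⁻ b : ι → ℝ, ENNReal.ofReal (∏ j, poisson (t j) (b j)) = 1 := by
  rw [← ofReal_integral_eq_lintegral_ofReal]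
  · rw [integral_fintype_prod_volume_eq_prod (fun j => poisson (t j)), Finset.prod_eq_one]
    · simp
    · intro j _
      rw [poisson_eq (ht j), ProbabilityTheory.integral_cauchyPDFReal_eq_one]
      exact (Real.toNNReal_pos.2 (ht j)).ne'
  · refine Integrable.fintype_prod (f := fun j => poisson (t j)) fun j => ?_
    rw [poisson_eq (ht j)]
    exact ProbabilityTheory.integrable_cauchyPDFReal 0
  · exact Filter.Eventually.of_forall fun b =>
      Finset.prod_nonneg fun j _ => poisson_nonneg (ht j) _

lemma bound_u {n m : ℕ} (e : Fin m → EuclideanSpace ℝ (Fin n)) (p : Fin m → Prop) [DecidablePred p]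
    (L : ({j // p j} → ℝ) ≃L[ℝ] EuclideanSpace ℝ (Fin n))
    (hL : ∀ a, L a = ∑ j : {j // p j}, a j • e j) :
    ∃ c : ℝ, 0 ≤ c ∧ ∀ (f : EuclideanSpace ℝ (Fin n) → ℝ), Integrable f →
      ∀ (x : EuclideanSpace ℝ (Fin n)) (t : Fin m → ℝ), (∀ j, 0 < t j) →
        |iterPoisson e f t x| ≤ (∏ j : {j // p j}, (t j)⁻¹) * (c * ∫ y, |f y|) := by
  have := L.isAddHaarMeasure_map volume
  set c := Measure.addHaarScalarFactor (Measure.map L volume)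
    (volume : Measure (EuclideanSpace ℝ (Fin n))) with hc
  have hmap : Measure.map L volume = c • volume := Measure.isAddLeftInvariant_eq_smul _ _
  refine ⟨c, c.2, fun f hf x t ht => ?_⟩
  have hfin : ∫⁻ y, ‖f y‖ₑ = ENNReal.ofReal (∫ y, |f y|) := by
    rw [ofReal_integral_eq_lintegral_ofReal hf.abs
      (Filter.Eventually.of_forall fun y => abs_nonneg _)]
    simp only [Real.enorm_eq_ofReal_abs]
  have hin : ∀ y, ∫⁻ a : {j // p j} → ℝ, ‖f (y - L a)‖ₑ
      = c * ENNReal.ofReal (∫ y, |f y|) := by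
    intro y
    have hemb : MeasurableEmbedding L := L.toHomeomorph.measurableEmbedding
    rw [← hemb.lintegral_map (fun z => ‖f (y - z)‖ₑ)]
    rw [hmap, lintegral_smul_measure, lintegral_sub_left_eq_self (fun z => ‖f z‖ₑ), hfin]
    rfl
  have hA : (0:ℝ) ≤ ∏ j : {j // p j}, (t j)⁻¹ :=
    Finset.prod_nonneg fun j _ => (inv_pos.2 (ht j)).le
  have hN : (0:ℝ) ≤ ∫ y, |f y| := integral_nonneg fun y => abs_nonneg _
  have key : ‖iterPoisson e f t x‖ₑ ≤
      ENNReal.ofReal ((∏ j : {j // p j}, (t j)⁻¹) * (c * ∫ y, |f y|)) := by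
    unfold iterPoisson
    refine (enorm_integral_le_lintegral_enorm _).trans ?_
    set F : ({j // p j} → ℝ) × ({j // ¬ p j} → ℝ) → ENNReal := fun q =>
      ENNReal.ofReal (∏ j : {j // p j}, (t j)⁻¹) *
      ENNReal.ofReal (∏ j : {j // ¬ p j}, poisson (t j) (q.2 j)) *
      ‖f (x - (∑ j : {j // ¬ p j}, q.2 j • e j) - L q.1)‖ₑ with hF
    calc ∫⁻ s : Fin m → ℝ, ‖(∏ j, poisson (t j) (s j)) * f (x - ∑ j, s j • e j)‖ₑ
        ≤ ∫⁻ s : Fin m → ℝ, F (MeasurableEquiv.piEquivPiSubtypeProd (fun _ => ℝ)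
            (fun j => p j) s) := by
          refine lintegral_mono fun s => ?_
          simp only [hF, MeasurableEquiv.piEquivPiSubtypeProd, MeasurableEquiv.coe_mk,
            Equiv.piEquivPiSubtypeProd, Equiv.coe_fn_mk, hL]
          rw [enorm_mul, ← ENNReal.ofReal_mul hA,
            ← Fintype.sum_subtype_add_sum_subtype (fun j => p j) (fun j => s j • e j),
            add_comm, sub_add_eq_sub_sub]
          gcongr
          rw [Real.enorm_eq_ofReal_abs,
            abs_of_nonneg (Finset.prod_nonneg fun j _ => poisson_nonneg (ht j) _),
            ← Fintype.prod_subtype_mul_prod_subtype (fun j => p j)]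
          refine ENNReal.ofReal_le_ofReal ?_
          refine mul_le_mul_of_nonneg_right ?_
            (Finset.prod_nonneg fun j _ => poisson_nonneg (ht j) _)
          exact Finset.prod_le_prod (fun j _ => poisson_nonneg (ht j) _)
            (fun j _ => poisson_le (ht j) _)
      _ = ∫⁻ q, F q := (volume_preserving_piEquivPiSubtypeProd (fun _ : Fin m => ℝ)
            (fun j => p j)).lintegral_comp_emb (MeasurableEquiv.measurableEmbedding _) F
      _ = ∫⁻ q : ({j // ¬ p j} → ℝ) × ({j // p j} → ℝ), F q.swap :=
            (lintegral_prod_swap F).symm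
      _ ≤ ∫⁻ b : {j // ¬ p j} → ℝ, ∫⁻ a : {j // p j} → ℝ, F (a, b) :=
            lintegral_prod_le _
      _ = ∫⁻ b : {j // ¬ p j} → ℝ,
          ENNReal.ofReal (∏ j : {j // ¬ p j}, poisson (t j) (b j)) *
          (ENNReal.ofReal (∏ j : {j // p j}, (t j)⁻¹) *
            (c * ENNReal.ofReal (∫ y, |f y|))) := by
          refine lintegral_congr fun b => ?_
          simp only [hF]
          rw [lintegral_const_mul' _ _ (ENNReal.mul_ne_top ENNReal.ofReal_ne_top
            ENNReal.ofReal_ne_top), hin]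
          ring
      _ = _ := by
          rw [lintegral_mul_const' _ _ (by finiteness),
            lintegral_prod_poisson (fun j : {j // ¬ p j} => t j) (fun j => ht j), one_mul,
            ENNReal.ofReal_mul hA, ENNReal.ofReal_mul c.coe_nonneg]
          simp
  rw [Real.enorm_eq_ofReal_abs] at key
  exact (ENNReal.ofReal_le_ofReal_iff (mul_nonneg hA (mul_nonneg c.2 hN))).1 key

lemma bound_vol {n m : ℕ} (e : Fin m → EuclideanSpace ℝ (Fin n)) (p : Fin m → Prop) [DecidablePred p]
    (L : ({j // p j} → ℝ) ≃L[ℝ] EuclideanSpace ℝ (Fin n))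
    (hL : ∀ a, L a = ∑ j : {j // p j}, a j • e j) :
    ∃ c : ℝ, 0 ≤ c ∧ ∀ (t : Fin m → ℝ), (∀ j, 0 < t j) →
      (∀ j, p j → ∀ k, ¬ p k → t k ≤ t j) →
      0 < (volume (twistedRect e 0 t)).toReal ∧
      (volume (twistedRect e 0 t)).toReal ≤ c * ∏ j : {j // p j}, t j := by
  have := L.symm.isAddHaarMeasure_map volume
  set c := Measure.addHaarScalarFactor (Measure.map L.symm volume)
    (volume : Measure ({j // p j} → ℝ)) with hc
  have hmap : Measure.map L.symm volume = c • volume := Measure.isAddLeftInvariant_eq_smul _ _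
  have hvol : ∀ r : {j // p j} → ℝ,
      volume (L '' (Set.univ.pi fun j => Set.Ioo (-(r j)) (r j))) =
        c * ∏ j, ENNReal.ofReal (2 * r j) := by
    intro r
    have h1 : L '' (Set.univ.pi fun j => Set.Ioo (-(r j)) (r j)) =
        L.symm ⁻¹' (Set.univ.pi fun j => Set.Ioo (-(r j)) (r j)) := by
      exact L.toEquiv.image_eq_preimage_symm _
    have hemb : MeasurableEmbedding L.symm := L.symm.toHomeomorph.measurableEmbedding
    rw [h1, ← hemb.map_apply]
    rw [hmap, Measure.smul_apply, Real.volume_pi_Ioo]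
    simp only [sub_neg_eq_add, ← two_mul]
    rfl
  -- coefficient bound
  set K : ℝ := 1 + ∑ k : Fin m, ‖L.symm (e k)‖ with hK
  have hK0 : 0 ≤ K := by positivity
  refine ⟨c * (2 * K) ^ Fintype.card {j // p j}, by positivity, fun t ht htop => ?_⟩
  have hsub : twistedRect e 0 t ⊆
      L '' (Set.univ.pi fun j => Set.Ioo (-(K * t j)) (K * t j)) := by
    rintro y ⟨lam, hlam, rfl⟩
    refine ⟨L.symm (0 + ∑ j, lam j • e j), ?_, by simp⟩
    intro i _
    rw [Set.mem_Ioo, ← abs_lt]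
    have hsplit : (0 + ∑ j, lam j • e j) = L (fun j => lam j) +
        ∑ k : {k // ¬ p k}, lam k • e k := by
      rw [hL, Fintype.sum_subtype_add_sum_subtype (fun j => p j) (fun j => lam j • e j),
        zero_add]
    rw [hsplit, map_add, L.symm_apply_apply, map_sum, Pi.add_apply, Finset.sum_apply]
    have hb : |∑ k : {k // ¬ p k}, (L.symm (lam k • e k)) i| ≤
        (∑ k : Fin m, ‖L.symm (e k)‖) * t i := by
      calc _ ≤ ∑ k : {k // ¬ p k}, |(L.symm (lam k • e k)) i| :=
            Finset.abs_sum_le_sum_abs _ _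
        _ ≤ ∑ k : {k // ¬ p k}, ‖L.symm (e k)‖ * t i := by
            refine Finset.sum_le_sum fun k _ => ?_
            rw [map_smul, Pi.smul_apply, smul_eq_mul, abs_mul, mul_comm]
            exact mul_le_mul (norm_le_pi_norm (L.symm (e k)) i)
              ((hlam k).le.trans (htop i i.2 k k.2)) (abs_nonneg _) (norm_nonneg _)
        _ ≤ ∑ k : Fin m, ‖L.symm (e k)‖ * t i := by
            rw [← Fintype.sum_subtype_add_sum_subtype (fun j => p j)
              (fun k => ‖L.symm (e k)‖ * t i)]
            refine le_add_of_nonneg_left (Finset.sum_nonneg fun k _ => ?_)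
            exact mul_nonneg (norm_nonneg _) (ht i).le
        _ = _ := by rw [Finset.sum_mul]
    calc _ ≤ |lam i| + |∑ k : {k // ¬ p k}, (L.symm (lam k • e k)) i| := abs_add_le _ _
      _ < t i + (∑ k : Fin m, ‖L.symm (e k)‖) * t i := add_lt_add_of_lt_of_le (hlam i) hb
      _ = K * t i := by rw [hK]; ring
  have hsup : L '' (Set.univ.pi fun j => Set.Ioo (-(t j)) (t j)) ⊆ twistedRect e 0 t := by
    rintro y ⟨a, ha, rfl⟩
    refine ⟨fun j => if h : p j then a ⟨j, h⟩ else 0, ?_, ?_⟩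
    · intro j
      by_cases h : p j
      · simp only [h, dite_true]
        exact abs_lt.2 (ha ⟨j, h⟩ trivial)
      · simp [h, ht j]
    · rw [zero_add, hL, ← Fintype.sum_subtype_add_sum_subtype (fun j => p j)]
      have h2 : ∑ k : {k // ¬ p k},
          (if h : p (k : Fin m) then a ⟨k, h⟩ else 0) • e k = 0 :=
        Finset.sum_eq_zero fun k _ => by simp [k.2]
      rw [h2, add_zero]
      refine Finset.sum_congr rfl fun j _ => ?_
      simp [j.2]
  have hle := measure_mono (μ := volume) hsub
  rw [hvol] at hle
  have heq : (c : ENNReal) * ∏ j : {j // p j}, ENNReal.ofReal (2 * (K * t j)) =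
      ENNReal.ofReal (c * (2 * K) ^ Fintype.card {j // p j} * ∏ j : {j // p j}, t j) := by
    have : ∏ j : {j // p j}, (2 * (K * t j)) = (2 * K) ^ Fintype.card {j // p j} * ∏ j : {j // p j}, t j := by
      simp only [← mul_assoc]
      rw [Finset.prod_mul_distrib]
      simp
    rw [← ENNReal.ofReal_prod_of_nonneg
      (fun (j : {j // p j}) _ => mul_nonneg two_pos.le (mul_nonneg hK0 (ht j).le)), this, mul_assoc,
      ENNReal.ofReal_mul c.coe_nonneg]
    simp
  rw [heq] at hle
  have hP : 0 ≤ ∏ j : {j // p j}, t j := Finset.prod_nonneg fun j _ => (ht j).le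
  refine ⟨ENNReal.toReal_pos ?_ (ne_top_of_le_ne_top ENNReal.ofReal_ne_top hle),
    ENNReal.toReal_le_of_le_ofReal (by positivity) hle⟩
  have hopen : IsOpen (L '' (Set.univ.pi fun j : {j // p j} => Set.Ioo (-(t j)) (t j))) :=
    L.toHomeomorph.isOpenMap _ (isOpen_set_pi Set.finite_univ fun j _ => isOpen_Ioo)
  have hne : (L '' (Set.univ.pi fun j : {j // p j} => Set.Ioo (-(t j)) (t j))).Nonempty :=
    ⟨_, 0, fun j _ => by simp [ht j], rfl⟩
  exact ((hopen.measure_pos volume hne).trans_le (measure_mono hsup)).ne'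

lemma bound_S {n m : ℕ} (e : Fin m → EuclideanSpace ℝ (Fin n)) (S : Finset (Fin m))
    (hS : S.card = n) (hli : LinearIndependent ℝ (fun i : S => e i)) :
    ∃ C : ℝ, 0 ≤ C ∧
      ∀ (f : EuclideanSpace ℝ (Fin n) → ℝ), Integrable f →
      ∀ (x : EuclideanSpace ℝ (Fin n)) (t : Fin m → ℝ), (∀ j, 0 < t j) →
        (∀ j ∈ S, ∀ k ∉ S, t k ≤ t j) →
        |iterPoisson e f t x| ≤
          C * (∫ y, |f y|) / (volume (twistedRect e 0 t)).toReal := by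
  have hcard : Fintype.card {j // j ∈ S} = n := by simp [hS]
  have main : ∀ (p : Fin m → Prop) [DecidablePred p],
      LinearIndependent ℝ (fun i : {j // p j} => e i) → Fintype.card {j // p j} = n →
    ∃ C : ℝ, 0 ≤ C ∧
      ∀ (f : EuclideanSpace ℝ (Fin n) → ℝ), Integrable f →
      ∀ (x : EuclideanSpace ℝ (Fin n)) (t : Fin m → ℝ), (∀ j, 0 < t j) →
        (∀ j, p j → ∀ k, ¬ p k → t k ≤ t j) →
        |iterPoisson e f t x| ≤
          C * (∫ y, |f y|) / (volume (twistedRect e 0 t)).toReal := by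
    intro p _ hli hp
    let b := basisOfLinearIndependentOfCardEqFinrank' (fun i : {j // p j} => e i) hli (by simp [hp])
    let L := b.equivFunL.symm
    have hL : ∀ a, L a = ∑ j : {j // p j}, a j • e j := by
      intro a
      have h := b.equivFun_symm_apply a
      simp only [b, coe_basisOfLinearIndependentOfCardEqFinrank'] at h
      exact h
    obtain ⟨c, hc, h1⟩ := bound_u e p L hL
    obtain ⟨d, hd, h2⟩ := bound_vol e p L hL
    refine ⟨c * d, mul_nonneg hc hd, fun f hf x t ht htop => ?_⟩
    obtain ⟨hpos, hle⟩ := h2 t ht htop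
    have hN : (0:ℝ) ≤ ∫ y, |f y| := integral_nonneg fun y => abs_nonneg _
    have hP : 0 < ∏ j : {j // p j}, t j := Finset.prod_pos fun j _ => ht j
    rw [le_div_iff₀ hpos]
    calc _ ≤ ((∏ j : {j // p j}, (t j)⁻¹) * (c * ∫ y, |f y|)) *
          (d * ∏ j : {j // p j}, t j) :=
          mul_le_mul (h1 f hf x t ht) hle hpos.le ((abs_nonneg _).trans (h1 f hf x t ht))
      _ = _ := by
          rw [Finset.prod_inv_distrib]
          field_simp
  exact main (fun j => j ∈ S) hli (by convert hcard)

/-- Pointwise bound for iterated Poisson integrals by the volume of the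
twisted rectangle: `|u(x,t)| ≲ ‖f‖₁ / |R(0,t)|`. -/
theorem iterPoisson_pointwise_bound {n m : ℕ} (hnm : n ≤ m)
    (e : Fin m → EuclideanSpace ℝ (Fin n))
    (hunit : ∀ j, ‖e j‖ = 1)
    (hindep : ∀ s : Finset (Fin m), s.card = n →
      LinearIndependent ℝ (fun i : s => e i)) :
    ∃ C : ℝ, 0 < C ∧
      ∀ (f : EuclideanSpace ℝ (Fin n) → ℝ), Integrable f →
      ∀ (x : EuclideanSpace ℝ (Fin n)) (t : Fin m → ℝ), (∀ j, 0 < t j) →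
        |iterPoisson e f t x| ≤
          C * (∫ y, |f y|) / (volume (twistedRect e 0 t)).toReal := by
  choose! C hC0 hC using fun (S : Finset (Fin m)) (hS : S.card = n) =>
    bound_S e S hS (hindep S hS)
  set T := Finset.univ.filter fun S : Finset (Fin m) => S.card = n with hT
  have hT0 : ∀ S ∈ T, 0 ≤ C S := fun S hS => hC0 S (Finset.mem_filter.1 hS).2
  refine ⟨1 + ∑ S ∈ T, C S, by linarith [Finset.sum_nonneg hT0], fun f hf x t ht => ?_⟩
  obtain ⟨S, hS, htop⟩ := exists_top_set t n hnm
  have hN : (0:ℝ) ≤ ∫ y, |f y| := integral_nonneg fun y => abs_nonneg _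
  refine (hC S hS f hf x t ht htop).trans ?_
  have : C S ≤ 1 + ∑ S ∈ T, C S := by
    linarith [Finset.single_le_sum hT0 (Finset.mem_filter.2 ⟨Finset.mem_univ S, hS⟩)]
  gcongr
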